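/- arXiv:2605.15234 — 2 statements merged into one kernel-verified Lean document; each statement's English description precedes it below -/
import Mathlib

section
/- Let Q ⪰ 0 be such that 𝒮[Q] ≻ 0, and let σ_Q := { t ∈ ℝ : there exists v ≠ 0 with Q v = t·𝒮[Q] v } be the generalized spectrum of the pencil (Q, 𝒮[Q]). Then σ_Q is a nonempty finite set of real numbers and P satisfies min σ_Q ≤ P ≤ max σ_Q (in particular P is finite). -/
open Matrix ComplexOrder ENNReal

noncomputable section

abbrev Mat (N : ℕ) := Matrix (Fin N) (Fin N) ℂ

/-- Real quadratic form `v* A v` (real part). -/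
def qf {N : ℕ} (A : Mat N) (v : Fin N → ℂ) : ℝ := (star v ⬝ᵥ A *ᵥ v).re

/-- The congruence map `Q ↦ Lᴴ Q L`. -/
def conjBy {N : ℕ} (L : Mat N) : Mat N →ₗ[ℂ] Mat N where
  toFun Q := Lᴴ * Q * L
  map_add' Q Q' := by simp [Matrix.mul_add, Matrix.add_mul]
  map_smul' a Q := by simp [Matrix.mul_smul, Matrix.smul_mul]

/-- The operator `𝒮[Q] = 𝒱[(L⁻¹)ᴴ Q L⁻¹]`. -/
def Smap {N : ℕ} (L : Mat N) (V : Mat N →ₗ[ℂ] Mat N) : Module.End ℂ (Mat N) :=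
  V ∘ₗ conjBy L⁻¹

/-- `P := sup_{Q ≻ 0} inf_{v ≠ 0} (v* L* Q L v)/(v* 𝒱[Q] v)`, valued in `[0,∞]`,
with the convention that a ratio with zero denominator and positive numerator is `∞`. -/
def Pval {N : ℕ} (L : Mat N) (V : Mat N →ₗ[ℂ] Mat N) : ℝ≥0∞ :=
  ⨆ Q : {Q : Mat N // Q.PosDef}, ⨅ v : {v : Fin N → ℂ // v ≠ 0},
    ENNReal.ofReal (qf (Lᴴ * Q.1 * L) v.1) / ENNReal.ofReal (qf (V Q.1) v.1)

/-- Spectral radius of a linear endomorphism of matrix space: the largest modulus of an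
eigenvalue. -/
def specRad {N : ℕ} (f : Module.End ℂ (Mat N)) : ℝ :=
  sSup {r : ℝ | ∃ μ : ℂ, f.HasEigenvalue μ ∧ r = ‖μ‖}

/-!
Conjugating by a factor `C` of `B = Cᴴ C` turns the pencil `(A, B)` into an ordinary Hermitian
matrix, so the extreme generalized eigenvalues are the optimal constants in `m B ⪯ A ⪯ M B`.
Substituting `T = Lᴴ R L`, `P` becomes the supremum of the `c ≥ 0` for which `c 𝒮[T] ⪯ T` has a
solution `T ≻ 0`. When `min σ_Q > 0`, the lower bound is the choice `T = Q`. For the upper bound,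
let `M = max σ_Q` and, for `c 𝒮[T] ⪯ T` with `c > 0`, let `b` be the smallest number with
`Q ⪯ b T`. Monotonicity of `𝒮` gives `Q ⪯ M 𝒮[Q] ⪯ M b 𝒮[T] ⪯ (M b / c) T`, and minimality of
`b > 0` forces `c ≤ M`.
-/

open scoped MatrixOrder

section Congruence

theorem conjTranspose_mul_mul_cancel {m n α : Type*} [Fintype m] [DecidableEq m] [Fintype n]
    [Semiring α] [StarRing α] {M : Matrix m n α} {K : Matrix n m α} (h : M * K = 1)
    (A : Matrix m m α) : Kᴴ * (Mᴴ * A * M) * K = A := by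
  have h' : Kᴴ * Mᴴ = 1 := by rw [← conjTranspose_mul, h, conjTranspose_one]
  rw [Matrix.mul_assoc, Matrix.mul_assoc, h, Matrix.mul_one, ← Matrix.mul_assoc, h', Matrix.one_mul]

theorem star_mul_mul_le_star_mul_mul_iff {R : Type*} [Ring R] [PartialOrder R] [StarRing R]
    [StarOrderedRing R] {c : R} (hc : IsUnit c) {a b : R} :
    star c * a * c ≤ star c * b * c ↔ a ≤ b := by
  rw [← sub_nonneg, ← sub_mul, ← mul_sub, hc.star_left_conjugate_nonneg_iff, sub_nonneg]

theorem smul_mul_eq_mul_algebraMap_mul {R A : Type*} [CommSemiring R] [Semiring A] [Algebra R A]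
    (r : R) (a b : A) : r • (a * b) = a * algebraMap R A r * b := by
  rw [← Algebra.commutes, mul_assoc, Algebra.smul_def]

theorem posDef_of_smul_le {n 𝕜 : Type*} [RCLike 𝕜] {A B : Matrix n n 𝕜} (hB : B.PosDef) {c : ℝ}
    (hc : 0 < c) (h : c • B ≤ A) : A.PosDef := by
  rw [← add_sub_cancel (c • B) A]
  exact (hB.smul hc).add_posSemidef h

end Congruence

section Pencil

variable {n 𝕜 : Type*} [Fintype n] [RCLike 𝕜]

/-- The real generalized spectrum of the pencil `(A, B)`, used to compare `A` with multiples of `B`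
in the Loewner order; `σ_Q` is the case `A = Q`, `B = 𝒮[Q]`. Only real generalized eigenvalues are
collected, which is all of them when `A` is Hermitian and `B ≻ 0`. -/
def pencilSpectrum (A B : Matrix n n 𝕜) : Set ℝ :=
  {t | ∃ v : n → 𝕜, v ≠ 0 ∧ A *ᵥ v = t • (B *ᵥ v)}

section Spectrum

variable [DecidableEq n]

theorem mem_pencilSpectrum_iff_not_isUnit {A B : Matrix n n 𝕜} {t : ℝ} :
    t ∈ pencilSpectrum A B ↔ ¬ IsUnit (t • B - A) := by
  have hker (v : n → 𝕜) : A *ᵥ v = t • (B *ᵥ v) ↔ (t • B - A) *ᵥ v = 0 := by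
    rw [sub_mulVec, smul_mulVec, sub_eq_zero, eq_comm]
  simp only [pencilSpectrum, Set.mem_ofPred_eq, hker, exists_mulVec_eq_zero_iff,
    isUnit_iff_isUnit_det, isUnit_iff_ne_zero, not_not]

theorem pencilSpectrum_mul_mul {U W : Matrix n n 𝕜} (hU : IsUnit U) (hW : IsUnit W)
    (A B : Matrix n n 𝕜) : pencilSpectrum (U * A * W) (U * B * W) = pencilSpectrum A B := by
  ext t
  have hfactor : t • (U * B * W) - U * A * W = U * (t • B - A) * W := by
    rw [mul_sub, sub_mul, mul_smul_comm, smul_mul_assoc]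
  simp only [mem_pencilSpectrum_iff_not_isUnit, hfactor, IsUnit.mul_iff, hU, hW, true_and,
    and_true]

theorem pencilSpectrum_one (A : Matrix n n 𝕜) : pencilSpectrum A 1 = spectrum ℝ A := by
  ext t
  rw [mem_pencilSpectrum_iff_not_isUnit, spectrum.mem_iff, Algebra.algebraMap_eq_smul_one]

theorem pencilSpectrum_star_mul_mul_star_mul {C : Matrix n n 𝕜} (hC : IsUnit C)
    (Y : Matrix n n 𝕜) : pencilSpectrum (star C * Y * C) (star C * C) = spectrum ℝ Y := by
  rw [← pencilSpectrum_one, ← pencilSpectrum_mul_mul hC.star hC Y 1, mul_one]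

theorem finite_pencilSpectrum (A : Matrix n n 𝕜) {B : Matrix n n 𝕜} (hB : IsUnit B) :
    (pencilSpectrum A B).Finite := by
  have hspec : pencilSpectrum A B = spectrum ℝ (B⁻¹ * A) := by
    rw [← pencilSpectrum_one, ← pencilSpectrum_mul_mul hB isUnit_one (B⁻¹ * A) 1, mul_one, mul_one,
      mul_one, mul_nonsing_inv_cancel_left _ _ ((isUnit_iff_isUnit_det B).mp hB)]
  rw [hspec]
  exact finite_real_spectrum

theorem exists_eq_star_mul_mul_of_isHermitian_of_posDef {A B : Matrix n n 𝕜} (hA : A.IsHermitian)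
    (hB : B.PosDef) : ∃ C Y : Matrix n n 𝕜,
      IsUnit C ∧ Y.IsHermitian ∧ A = star C * Y * C ∧ B = star C * C := by
  obtain ⟨C, hC, hBC⟩ :=
    CStarAlgebra.isStrictlyPositive_iff_eq_star_mul_self.mp hB.isStrictlyPositive
  have hinv : C⁻¹ * C = 1 := nonsing_inv_mul C ((isUnit_iff_isUnit_det C).mp hC)
  exact ⟨C, C⁻¹ᴴ * A * C⁻¹, hC, isHermitian_conjTranspose_mul_mul C⁻¹ hA,
    (conjTranspose_mul_mul_cancel hinv A).symm, hBC⟩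

end Spectrum

theorem nonempty_pencilSpectrum [Nonempty n] {A B : Matrix n n 𝕜} (hA : A.IsHermitian)
    (hB : B.PosDef) : (pencilSpectrum A B).Nonempty := by
  classical
  obtain ⟨C, Y, hC, hY, rfl, rfl⟩ := exists_eq_star_mul_mul_of_isHermitian_of_posDef hA hB
  rw [pencilSpectrum_star_mul_mul_star_mul hC, hY.spectrum_real_eq_range_eigenvalues]
  exact Set.range_nonempty _

theorem le_smul_iff_forall_mem_pencilSpectrum {A B : Matrix n n 𝕜} (hA : A.IsHermitian)
    (hB : B.PosDef) {r : ℝ} : A ≤ r • B ↔ ∀ t ∈ pencilSpectrum A B, t ≤ r := by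
  classical
  obtain ⟨C, Y, hC, hY, rfl, rfl⟩ := exists_eq_star_mul_mul_of_isHermitian_of_posDef hA hB
  rw [smul_mul_eq_mul_algebraMap_mul, star_mul_mul_le_star_mul_mul_iff hC,
    pencilSpectrum_star_mul_mul_star_mul hC, le_algebraMap_iff_spectrum_le hY]

theorem smul_le_iff_forall_mem_pencilSpectrum {A B : Matrix n n 𝕜} (hA : A.IsHermitian)
    (hB : B.PosDef) {r : ℝ} : r • B ≤ A ↔ ∀ t ∈ pencilSpectrum A B, r ≤ t := by
  classical
  obtain ⟨C, Y, hC, hY, rfl, rfl⟩ := exists_eq_star_mul_mul_of_isHermitian_of_posDef hA hB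
  rw [smul_mul_eq_mul_algebraMap_mul, star_mul_mul_le_star_mul_mul_iff hC,
    pencilSpectrum_star_mul_mul_star_mul hC, algebraMap_le_iff_le_spectrum hY]

theorem isLeast_sSup_pencilSpectrum [Nonempty n] {A B : Matrix n n 𝕜} (hA : A.IsHermitian)
    (hB : B.PosDef) : IsLeast {r : ℝ | A ≤ r • B} (sSup (pencilSpectrum A B)) := by
  classical
  simp only [le_smul_iff_forall_mem_pencilSpectrum hA hB]
  exact isLUB_csSup (nonempty_pencilSpectrum hA hB) (finite_pencilSpectrum A hB.isUnit).bddAbove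

theorem isGreatest_sInf_pencilSpectrum [Nonempty n] {A B : Matrix n n 𝕜} (hA : A.IsHermitian)
    (hB : B.PosDef) : IsGreatest {r : ℝ | r • B ≤ A} (sInf (pencilSpectrum A B)) := by
  classical
  simp only [smul_le_iff_forall_mem_pencilSpectrum hA hB]
  exact isGLB_csInf (nonempty_pencilSpectrum hA hB) (finite_pencilSpectrum A hB.isUnit).bddBelow

end Pencil

theorem le_of_smul_map_le_of_le_smul_map {n 𝕜 : Type*} [Finite n] [Nonempty n] [RCLike 𝕜]
    {S : Matrix n n 𝕜 → Matrix n n 𝕜} (hmono : Monotone S)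
    (hhom : ∀ (r : ℝ) A, 0 ≤ r → S (r • A) = r • S A)
    {Q T : Matrix n n 𝕜} (hQ : 0 ≤ Q) (hQ0 : Q ≠ 0) (hT : T.PosDef) {c M : ℝ}
    (hcT : c • S T ≤ T) (hQM : Q ≤ M • S Q) : c ≤ M := by
  have := Fintype.ofFinite n
  have hS0 : S 0 = 0 := by simpa only [zero_smul] using hhom 0 0 le_rfl
  have hM : 0 ≤ M := by
    by_contra! hM
    have hSQ : 0 ≤ S Q := hS0 ▸ hmono hQ
    exact hQ0 ((hQM.trans (smul_nonpos_of_nonpos_of_nonneg hM.le hSQ)).antisymm hQ)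
  rcases le_or_gt c 0 with hc | hc
  · exact hc.trans hM
  obtain ⟨hQb, hmin⟩ := isLeast_sSup_pencilSpectrum (nonneg_iff_posSemidef.mp hQ).isHermitian hT
  set b := sSup (pencilSpectrum Q T)
  have hb : 0 < b := by
    by_contra! hb
    have hT0 : 0 ≤ T := nonneg_iff_posSemidef.mpr hT.posSemidef
    exact hQ0 ((hQb.trans (smul_nonpos_of_nonpos_of_nonneg hb hT0)).antisymm hQ)
  have hle : Q ≤ (M * b / c) • T := calc
    Q ≤ M • S Q := hQM
    _ ≤ M • S (b • T) := smul_le_smul_of_nonneg_left (hmono hQb) hM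
    _ = (M * b / c) • c • S T := by
      rw [hhom b T hb.le, smul_smul, smul_smul, div_mul_cancel₀ _ hc.ne']
    _ ≤ (M * b / c) • T := smul_le_smul_of_nonneg_left hcT (by positivity)
  have hbc : b * c ≤ b * M := by
    rw [mul_comm b M, ← le_div_iff₀ hc]
    exact hmin hle
  exact le_of_mul_le_mul_left hbc hb

section Quotient

variable {N : ℕ}

theorem qf_smul (r : ℝ) (A : Mat N) (v : Fin N → ℂ) : qf (r • A) v = r * qf A v := by
  rw [qf, qf, smul_mulVec, dotProduct_smul, Complex.real_smul, Complex.re_ofReal_mul]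

theorem qf_sub (A B : Mat N) (v : Fin N → ℂ) : qf (A - B) v = qf A v - qf B v := by
  rw [qf, qf, qf, sub_mulVec, dotProduct_sub, Complex.sub_re]

theorem posSemidef_iff_forall_qf_nonneg {A : Mat N} (hA : A.IsHermitian) :
    A.PosSemidef ↔ ∀ v ≠ 0, 0 ≤ qf A v := by
  refine ⟨fun h v _ => h.re_dotProduct_nonneg v,
    fun h => .of_dotProduct_mulVec_nonneg hA fun v => ?_⟩
  rcases eq_or_ne v 0 with rfl | hv
  · simp
  · exact Complex.nonneg_iff.mpr ⟨h v hv, (hA.im_star_dotProduct_mulVec_self v).symm⟩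

theorem le_iff_forall_qf_le {A B : Mat N} (hA : A.IsHermitian) (hB : B.IsHermitian) :
    A ≤ B ↔ ∀ v ≠ 0, qf A v ≤ qf B v := by
  simp only [le_iff, posSemidef_iff_forall_qf_nonneg (hB.sub hA), qf_sub, sub_nonneg]

theorem ofReal_le_div_ofReal_iff {c x y : ℝ} (hc : 0 ≤ c) (hx : 0 < x) :
    ENNReal.ofReal c ≤ ENNReal.ofReal x / ENNReal.ofReal y ↔ c * y ≤ x := by
  rw [ENNReal.le_div_iff_mul_le (.inr (ENNReal.ofReal_pos.mpr hx).ne') (.inl ENNReal.ofReal_ne_top),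
    ← ENNReal.ofReal_mul hc, ENNReal.ofReal_le_ofReal_iff hx.le]

theorem ofReal_le_iInf_qf_div_qf_iff {T W : Mat N} (hT : T.PosDef) (hW : W.IsHermitian) {c : ℝ}
    (hc : 0 ≤ c) :
    ENNReal.ofReal c ≤ ⨅ v : {v : Fin N → ℂ // v ≠ 0},
      ENNReal.ofReal (qf T v.1) / ENNReal.ofReal (qf W v.1) ↔ c • W ≤ T := by
  rw [le_iInf_iff, le_iff_forall_qf_le (hW.smul (.all c)) hT.isHermitian, Subtype.forall]
  exact forall₂_congr fun v hv => by
    have hpos : 0 < qf T v := hT.re_dotProduct_pos hv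
    rw [qf_smul, ofReal_le_div_ofReal_iff hc hpos]

end Quotient

section Pval

variable {N : ℕ} {L : Mat N} (V : Mat N →ₗ[ℂ] Mat N)

theorem Smap_conjTranspose_mul_mul (hL : IsUnit L) (R : Mat N) : Smap L V (Lᴴ * R * L) = V R :=
  congrArg V (conjTranspose_mul_mul_cancel
    (mul_nonsing_inv L ((isUnit_iff_isUnit_det L).mp hL)) R)

theorem Pval_eq_iSup_iInf_qf_div_qf_Smap (hL : IsUnit L) :
    Pval L V = ⨆ T : {T : Mat N // T.PosDef}, ⨅ v : {v : Fin N → ℂ // v ≠ 0},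
      ENNReal.ofReal (qf T.1 v.1) / ENNReal.ofReal (qf (Smap L V T.1) v.1) := by
  have hinv : L⁻¹ * L = 1 := nonsing_inv_mul L ((isUnit_iff_isUnit_det L).mp hL)
  let conjL (R : {R : Mat N // R.PosDef}) : {T : Mat N // T.PosDef} :=
    ⟨Lᴴ * R.1 * L, (IsUnit.posDef_star_left_conjugate_iff hL).mpr R.2⟩
  have hsurj : Function.Surjective conjL := fun T =>
    ⟨⟨L⁻¹ᴴ * T.1 * L⁻¹, T.2.conjTranspose_mul_mul_same
      (mulVec_injective_of_isUnit (isUnit_nonsing_inv_iff.mpr hL))⟩,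
      Subtype.ext (conjTranspose_mul_mul_cancel hinv T.1)⟩
  exact hsurj.iSup_congr conjL fun R => by simp only [conjL, Smap_conjTranspose_mul_mul V hL]

variable {V}

theorem monotone_Smap (hV : ∀ Q : Mat N, Q.PosSemidef → (V Q).PosSemidef) :
    Monotone (Smap L V) :=
  (monotone_iff_map_nonneg (Smap L V)).mpr fun _ hA => nonneg_iff_posSemidef.mpr <|
    hV _ ((nonneg_iff_posSemidef.mp hA).conjTranspose_mul_mul_same L⁻¹)

theorem ofReal_le_Pval (hL : IsUnit L) {T : Mat N} (hST : (Smap L V T).PosDef) {c : ℝ}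
    (hcT : c • Smap L V T ≤ T) : ENNReal.ofReal c ≤ Pval L V := by
  rcases le_or_gt c 0 with hc | hc
  · exact (ENNReal.ofReal_of_nonpos hc).trans_le zero_le
  have hT : T.PosDef := posDef_of_smul_le hST hc hcT
  rw [Pval_eq_iSup_iInf_qf_div_qf_Smap V hL]
  exact le_iSup_of_le ⟨T, hT⟩ ((ofReal_le_iInf_qf_div_qf_iff hT hST.isHermitian hc.le).mpr hcT)

theorem Pval_le_ofReal (hL : IsUnit L) (hS : ∀ T, T.PosDef → (Smap L V T).IsHermitian) {M : ℝ}
    (hM : ∀ T c, T.PosDef → c • Smap L V T ≤ T → c ≤ M) : Pval L V ≤ ENNReal.ofReal M := by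
  rw [Pval_eq_iSup_iInf_qf_div_qf_Smap V hL]
  refine iSup_le fun ⟨T, hT⟩ => ENNReal.le_of_forall_nnreal_lt fun c hc => ?_
  rw [← ENNReal.ofReal_coe_nnreal] at hc ⊢
  exact ENNReal.ofReal_le_ofReal
    (hM T c hT ((ofReal_le_iInf_qf_div_qf_iff hT (hS T hT) c.coe_nonneg).mp hc.le))

end Pval

/-- for `Q ⪰ 0` with `𝒮[Q] ≻ 0`, the generalized spectrum
`σ_Q = { t ∈ ℝ : ∃ v ≠ 0, Q v = t·𝒮[Q] v }` is a nonempty finite set of reals and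
`min σ_Q ≤ P ≤ max σ_Q` (in particular `P` is finite). -/
theorem stmt3 {N : ℕ} (hN : 0 < N) (L : Mat N) (hL : IsUnit L)
    (V : Mat N →ₗ[ℂ] Mat N)
    (hVherm : ∀ Q : Mat N, Q.IsHermitian → (V Q).IsHermitian)
    (hVpsd : ∀ Q : Mat N, Q.PosSemidef → (V Q).PosSemidef)
    (Q : Mat N) (hQ : Q.PosSemidef) (hSQ : ((Smap L V) Q).PosDef) :
    Set.Finite {t : ℝ | ∃ v : Fin N → ℂ, v ≠ 0 ∧ Q *ᵥ v = (t : ℂ) • ((Smap L V) Q *ᵥ v)} ∧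
    Set.Nonempty {t : ℝ | ∃ v : Fin N → ℂ, v ≠ 0 ∧ Q *ᵥ v = (t : ℂ) • ((Smap L V) Q *ᵥ v)} ∧
    ENNReal.ofReal
        (sInf {t : ℝ | ∃ v : Fin N → ℂ, v ≠ 0 ∧ Q *ᵥ v = (t : ℂ) • ((Smap L V) Q *ᵥ v)})
      ≤ Pval L V ∧
    Pval L V ≤ ENNReal.ofReal
        (sSup {t : ℝ | ∃ v : Fin N → ℂ, v ≠ 0 ∧ Q *ᵥ v = (t : ℂ) • ((Smap L V) Q *ᵥ v)}) := by
  have : Nonempty (Fin N) := Fin.pos_iff_nonempty.mp hN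
  have hS : Monotone (Smap L V) := monotone_Smap hVpsd
  have hQ0 : Q ≠ 0 := by
    rintro rfl
    exact hSQ.isUnit.ne_zero (map_zero _)
  have hσ : {t : ℝ | ∃ v : Fin N → ℂ, v ≠ 0 ∧ Q *ᵥ v = (t : ℂ) • (Smap L V Q *ᵥ v)} =
      pencilSpectrum Q (Smap L V Q) := by
    simp only [pencilSpectrum, Complex.coe_smul]
  rw [hσ]
  refine ⟨finite_pencilSpectrum Q hSQ.isUnit, nonempty_pencilSpectrum hQ.isHermitian hSQ,
    ofReal_le_Pval hL hSQ (isGreatest_sInf_pencilSpectrum hQ.isHermitian hSQ).1,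
    Pval_le_ofReal hL (fun T hT => ?_) fun T c hT hcT => ?_⟩
  · have hST : 0 ≤ Smap L V T := map_zero (Smap L V) ▸ hS hT.posSemidef.nonneg
    exact (nonneg_iff_posSemidef.mp hST).isHermitian
  · exact le_of_smul_map_le_of_le_smul_map hS (fun r A _ => LinearMap.map_smul_of_tower _ r A)
      hQ.nonneg hQ0 hT hcT (isLeast_sSup_pencilSpectrum hQ.isHermitian hSQ).1

end
end

section
/- Let C ∈ M_N be invertible and 𝒱 : M_N → M_N be ℂ-linear, sending Hermitian matrices to Hermitian matrices and positive semidefinite matrices to positive semidefinite matrices. For each M let Ĉ_M ∈ M_N and let 𝒱̂_M : M_N → M_N be ℂ-linear maps sending Hermitian matrices to Hermitian matrices and positive semidefinite matrices to positive semidefinite matrices, and suppose Ĉ_M → C and 𝒱̂_M[Q] → 𝒱[Q] for every Q ∈ M_N as M → ∞. Define P̂_M := sup_{Q ≻ 0} inf_{v ≠ 0} (v* Ĉ_M* Q Ĉ_M v)/(v* 𝒱̂_M[Q] v) and P := sup_{Q ≻ 0} inf_{v ≠ 0} (v* C* Q C v)/(v* 𝒱[Q] v), both valued in [0,∞]. Then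 P̂_M → P in [0,∞] as M → ∞. -/
open Matrix ComplexOrder ENNReal

noncomputable section

/-
Put S[Q] = V[L⁻ᴴ Q L⁻¹]. Substituting Q ↦ L⁻ᴴ Q L⁻¹, the inner infimum of `Pval` is at least t
exactly when t S[Q] ≤ Q, so `Pval L V` is the supremum of the t for which t S has a strictly
positive subinvariant Q. Such a Q forces ρ(t S) ≤ 1, since S is positive and hence its powers are
controlled by their values on Q; conversely, if ρ(t S) < 1, a truncated Neumann series of t S
applied to 1 is such a Q. Hence `Pval L V` = ρ(S)⁻¹, and ρ is continuous in finite dimension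
because the roots of the characteristic polynomial depend continuously on the operator.
-/

open Filter NNReal Topology

section SpectralRadius

theorem spectralRadius_smul {𝕜 A : Type*} [NormedField 𝕜] [Ring A] [Algebra 𝕜 A] (c : 𝕜) (a : A) :
    spectralRadius 𝕜 (c • a) = ‖c‖₊ * spectralRadius 𝕜 a := by
  rcases eq_or_ne c 0 with rfl | hc
  · simp
  · have hspec : spectrum 𝕜 (c • a) = (c * ·) '' spectrum 𝕜 a :=
      spectrum.unit_smul_eq_smul a (Units.mk0 c hc)
    simp only [spectralRadius, hspec, iSup_image, nnnorm_mul, ENNReal.coe_mul, ENNReal.mul_iSup]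

theorem spectralRadius_toContinuousLinearMap {𝕜 E : Type*} [NontriviallyNormedField 𝕜]
    [CompleteSpace 𝕜] [NormedAddCommGroup E] [NormedSpace 𝕜 E] [FiniteDimensional 𝕜 E]
    (f : Module.End 𝕜 E) :
    spectralRadius 𝕜 (Module.End.toContinuousLinearMap E f) = spectralRadius 𝕜 f := by
  simp only [spectralRadius, AlgEquiv.spectrum_eq]

theorem spectralRadius_le_one_of_forall_norm_pow_le {𝕜 A : Type*} [NormedField 𝕜]
    [NormedRing A] [NormedAlgebra 𝕜 A] [CompleteSpace A] {a : A} {K : ℝ}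
    (h : ∀ n, ‖a ^ n‖ ≤ K) : spectralRadius 𝕜 a ≤ 1 := by
  refine iSup₂_le fun k hk ↦ ?_
  have hpow (n : ℕ) : ‖k‖ ^ n ≤ K * ‖(1 : A)‖ := calc
    ‖k‖ ^ n = ‖k ^ n‖ := (norm_pow k n).symm
    _ ≤ ‖a ^ n‖ * ‖(1 : A)‖ := spectrum.norm_le_norm_mul_of_mem (spectrum.pow_mem_pow a n hk)
    _ ≤ K * ‖(1 : A)‖ := by gcongr; exact h n
  by_contra! hk1
  obtain ⟨n, hn⟩ := pow_unbounded_of_one_lt (K * ‖(1 : A)‖) (by exact_mod_cast hk1 : 1 < ‖k‖)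
  exact (hpow n).not_gt hn

theorem exists_norm_pow_lt_one_of_spectralRadius_lt_one {A : Type*} [NormedRing A]
    [NormedAlgebra ℂ A] [CompleteSpace A] {a : A} (h : spectralRadius ℂ a < 1) :
    ∃ n ≠ 0, ‖a ^ n‖ < 1 := by
  have hroot :=
    (spectrum.pow_nnnorm_pow_one_div_tendsto_nhds_spectralRadius a).eventually_lt_const h
  obtain ⟨n, hn, hn0⟩ := (hroot.and (eventually_ne_atTop 0)).exists
  refine ⟨n, hn0, ?_⟩
  contrapose! hn
  exact ENNReal.one_le_rpow (by exact_mod_cast hn) (by positivity)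

theorem upperSemicontinuous_biSup_of_upperHemicontinuous {α β γ : Type*} [TopologicalSpace α]
    [TopologicalSpace β] [CompleteLinearOrder γ] [DenselyOrdered γ] {f : α → Set β} {g : β → γ}
    (hf : UpperHemicontinuous f) (hg : UpperSemicontinuous g) :
    UpperSemicontinuous fun a ↦ ⨆ b ∈ f a, g b := by
  intro a y hy
  obtain ⟨r, hr, hry⟩ := exists_between hy
  have hU : g ⁻¹' Set.Iio r ∈ 𝓝ˢ (f a) :=
    (hg.isOpen_preimage r).mem_nhdsSet.2 fun b hb ↦ (le_biSup g hb).trans_lt hr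
  filter_upwards [upperHemicontinuousAt_iff.1 (hf a) _ hU] with a' ha'
  exact (iSup₂_le fun b hb ↦ (subset_of_mem_nhdsSet ha' hb).le).trans_lt hry

theorem lowerSemicontinuous_biSup_of_lowerHemicontinuous {α β γ : Type*} [TopologicalSpace α]
    [TopologicalSpace β] [CompleteLinearOrder γ] {f : α → Set β} {g : β → γ}
    (hf : LowerHemicontinuous f) (hg : LowerSemicontinuous g) :
    LowerSemicontinuous fun a ↦ ⨆ b ∈ f a, g b := by
  intro a y hy
  obtain ⟨b, hb, hyb⟩ := lt_biSup_iff.1 hy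
  filter_upwards [lowerHemicontinuousAt_iff.1 (hf a) _ (hg.isOpen_preimage y) ⟨b, hb, hyb⟩]
    with a' ⟨b', hb', hyb'⟩
  exact lt_biSup_iff.2 ⟨b', hb', hyb'⟩

theorem exists_mem_roots_norm_sub_lt {K : Type*} [NormedField K] {p : Polynomial K}
    (hp : p.Splits) (hmonic : p.Monic) {z : K} {ε : ℝ} (hε : 0 < ε)
    (hz : ‖p.eval z‖ < ε ^ p.natDegree) : ∃ b ∈ p.roots, ‖z - b‖ < ε := by
  by_contra! hfar
  refine hz.not_ge ?_
  calc ε ^ p.natDegree = (p.roots.map fun _ ↦ ε).prod := by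
        rw [Multiset.map_const', Multiset.prod_replicate, hp.natDegree_eq_card_roots]
    _ ≤ (p.roots.map fun b ↦ ‖z - b‖).prod :=
        Multiset.prod_map_le_prod_map₀ _ _ (fun _ _ ↦ hε.le) hfar
    _ = ‖(p.roots.map fun b ↦ z - b).prod‖ :=
        (p.roots.prod_hom' (normHom : K →*₀ ℝ) fun b ↦ z - b)
    _ = ‖p.eval z‖ := by rw [hp.eval_eq_prod_roots_of_monic hmonic]

variable {n 𝕜 : Type*} [Fintype n] [DecidableEq n]

theorem lowerHemicontinuous_spectrum_matrix [NormedField 𝕜] [IsAlgClosed 𝕜] :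
    LowerHemicontinuous (spectrum 𝕜 : Matrix n n 𝕜 → Set 𝕜) := by
  refine fun A ↦ lowerHemicontinuousAt_iff.2 fun U hU ⟨μ, hμ, hμU⟩ ↦ ?_
  obtain ⟨ε, hε, hεU⟩ := Metric.isOpen_iff.1 hU μ hμU
  have hcont : Continuous fun B : Matrix n n 𝕜 ↦ ‖B.charpoly.eval μ‖ := by
    simp only [Matrix.eval_charpoly]
    fun_prop
  have hroot : ‖A.charpoly.eval μ‖ = 0 := by
    rw [norm_eq_zero]
    exact Matrix.mem_spectrum_iff_isRoot_charpoly.1 hμ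
  have hlt : ‖A.charpoly.eval μ‖ < ε ^ Fintype.card n := hroot.trans_lt (pow_pos hε _)
  filter_upwards [(hcont.tendsto A).eventually_lt_const hlt] with B hB
  rw [← B.charpoly_natDegree_eq_dim] at hB
  obtain ⟨b, hb, hμb⟩ :=
    exists_mem_roots_norm_sub_lt (IsAlgClosed.splits _) B.charpoly_monic hε hB
  exact ⟨b, Matrix.mem_spectrum_of_isRoot_charpoly (Polynomial.isRoot_of_mem_roots hb),
    hεU (mem_ball_iff_norm'.2 hμb)⟩

theorem continuous_spectralRadius_matrix :
    Continuous (spectralRadius ℂ : Matrix n n ℂ → ℝ≥0∞) := by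
  open scoped Matrix.Norms.L2Operator in
  have hnorm : Continuous fun z : ℂ ↦ (‖z‖₊ : ℝ≥0∞) := by fun_prop
  have : CompleteSpace (Matrix n n ℂ) := FiniteDimensional.complete ℂ _
  refine continuous_iff_lower_upperSemicontinuous.2 ⟨?_, ?_⟩
  · exact lowerSemicontinuous_biSup_of_lowerHemicontinuous
      lowerHemicontinuous_spectrum_matrix hnorm.lowerSemicontinuous
  · exact upperSemicontinuous_biSup_of_upperHemicontinuous
      (upperHemicontinuous_spectrum ℂ _) hnorm.upperSemicontinuous

theorem tendsto_spectralRadius_of_tendsto_apply {E ι : Type*} [AddCommGroup E] [Module ℂ E]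
    [TopologicalSpace E] [IsTopologicalAddGroup E] [ContinuousSMul ℂ E] [T2Space E]
    [FiniteDimensional ℂ E] {l : Filter ι} {f : ι → Module.End ℂ E} {g : Module.End ℂ E}
    (h : ∀ x, Tendsto (fun i ↦ f i x) l (𝓝 (g x))) :
    Tendsto (fun i ↦ spectralRadius ℂ (f i)) l (𝓝 (spectralRadius ℂ g)) := by
  let b := Module.finBasis ℂ E
  have hcoord (j) : Continuous (b.coord j) := LinearMap.continuous_of_finiteDimensional _
  have hmatrix : Tendsto (fun i ↦ (f i).toMatrix b b) l (𝓝 (g.toMatrix b b)) := by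
    refine tendsto_pi_nhds.2 fun j ↦ tendsto_pi_nhds.2 fun k ↦ ?_
    simpa only [LinearMap.toMatrix_apply, Function.comp_def, Module.Basis.coord_apply]
      using ((hcoord j).tendsto _).comp (h (b k))
  simpa only [Function.comp_def, spectralRadius, LinearMap.spectrum_toMatrix] using
    (continuous_spectralRadius_matrix.tendsto _).comp hmatrix

end SpectralRadius

section PositiveMap

theorem pow_apply_nonneg {R E : Type*} [Semiring R] [TopologicalSpace E] [AddCommMonoid E]
    [Module R E] [LE E] {T : E →L[R] E} (hT : ∀ x, 0 ≤ x → 0 ≤ T x) (n : ℕ) {x : E}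
    (hx : 0 ≤ x) : 0 ≤ (T ^ n) x := by
  induction n with
  | zero => exact hx
  | succ n ih =>
    rw [pow_succ']
    exact hT _ ih

variable {A : Type*} [CStarAlgebra A] [PartialOrder A] [StarOrderedRing A] {T : A →L[ℂ] A}

theorem norm_le_four_mul_norm_apply_one (hT : ∀ x, 0 ≤ x → 0 ≤ T x) : ‖T‖ ≤ 4 * ‖T 1‖ := by
  refine T.opNorm_le_bound (by positivity) fun x ↦ ?_
  obtain ⟨y, hy, hyx, hsum⟩ := CStarAlgebra.exists_sum_four_nonneg x
  calc ‖T x‖ = ‖∑ i : Fin 4, Complex.I ^ (i : ℕ) • T (y i)‖ := by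
        conv_lhs => rw [hsum]
        simp only [map_sum, map_smul]
    _ ≤ ∑ i : Fin 4, ‖Complex.I ^ (i : ℕ) • T (y i)‖ := norm_sum_le _ _
    _ = ∑ i : Fin 4, ‖T (y i)‖ := by
        simp only [norm_smul, norm_pow, Complex.norm_I, one_pow, one_mul]
    _ ≤ ∑ _ : Fin 4, ‖T 1‖ * ‖x‖ := by
        gcongr with i
        refine (PositiveLinearMap.norm_apply_le_of_nonneg
          (.mk₀ (T : A →ₗ[ℂ] A) hT) _ (hy i)).trans ?_
        gcongr
        exacts [le_rfl, hyx i]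
    _ = 4 * ‖T 1‖ * ‖x‖ := by simp [mul_assoc]

theorem exists_one_le_smul_of_isStrictlyPositive {q : A} (hq : IsStrictlyPositive q) :
    ∃ c : ℝ, 0 ≤ c ∧ 1 ≤ c • q := by
  rcases subsingleton_or_nontrivial A with _ | _
  · exact ⟨0, le_rfl, (Subsingleton.elim _ _).le⟩
  obtain ⟨r, hr, hrq⟩ : ∃ r > 0, algebraMap ℝ A r ≤ q :=
    (CFC.exists_pos_algebraMap_le_iff hq.isSelfAdjoint).2 fun x hx ↦ hq.spectrum_pos hx
  refine ⟨r⁻¹, by positivity, ?_⟩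
  calc (1 : A) = r⁻¹ • algebraMap ℝ A r := by
        rw [Algebra.algebraMap_eq_smul_one, inv_smul_smul₀ hr.ne']
    _ ≤ r⁻¹ • q := by gcongr

theorem spectralRadius_le_one_of_apply_le (hT : ∀ x, 0 ≤ x → 0 ≤ T x) {q : A}
    (hq : IsStrictlyPositive q) (hTq : T q ≤ q) : spectralRadius ℂ T ≤ 1 := by
  obtain ⟨c, hc, hcq⟩ := exists_one_le_smul_of_isStrictlyPositive hq
  have hmono (n : ℕ) : Monotone (T ^ n) := fun x y hxy ↦ by
    simpa only [map_sub, sub_nonneg] using pow_apply_nonneg hT n (sub_nonneg.2 hxy)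
  have hiter (n : ℕ) : (T ^ n) q ≤ q := by
    induction n with
    | zero => exact le_rfl
    | succ n ih =>
      rw [pow_succ]
      exact (hmono n hTq).trans ih
  have hone (n : ℕ) : (T ^ n) 1 ≤ c • q := calc
    (T ^ n) 1 ≤ (T ^ n) (c • q) := hmono n hcq
    _ = c • (T ^ n) q := (T ^ n).map_smul_of_tower c q
    _ ≤ c • q := by gcongr; exact hiter n
  refine spectralRadius_le_one_of_forall_norm_pow_le (K := 4 * ‖c • q‖) fun n ↦ ?_
  refine (norm_le_four_mul_norm_apply_one fun x ↦ pow_apply_nonneg hT n).trans ?_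
  gcongr
  exact CStarAlgebra.norm_le_norm_of_nonneg_of_le (pow_apply_nonneg hT n zero_le_one) (hone n)

theorem exists_isStrictlyPositive_apply_le_of_spectralRadius_lt_one
    (hT : ∀ x, 0 ≤ x → 0 ≤ T x) (hρ : spectralRadius ℂ T < 1) :
    ∃ q : A, IsStrictlyPositive q ∧ T q ≤ q := by
  nontriviality A
  obtain ⟨n, hn, hTn⟩ := exists_norm_pow_lt_one_of_spectralRadius_lt_one hρ
  have hTn1 : (T ^ n) 1 ≤ 1 := by
    rw [← CStarAlgebra.norm_le_one_iff_of_nonneg _ (pow_apply_nonneg hT n zero_le_one)]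
    simpa only [norm_one, mul_one] using (T ^ n).le_of_opNorm_le hTn.le 1
  refine ⟨∑ k ∈ Finset.range n, (T ^ k) 1, ?_, sub_nonneg.1 ?_⟩
  · rw [← Nat.succ_pred_eq_of_ne_zero hn, Finset.sum_range_succ']
    exact .nonneg_add (Finset.sum_nonneg fun k _ ↦ pow_apply_nonneg hT _ zero_le_one)
      isStrictlyPositive_one
  · have hgeom := DFunLike.congr_fun (mul_neg_geom_sum T n) 1
    simp only [mul_apply_eq_comp, one_apply_eq_self, _root_.sub_apply, _root_.sum_apply] at hgeom
    rw [hgeom]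
    exact sub_nonneg.2 hTn1

end PositiveMap

section PosSemidef

open scoped MatrixOrder Matrix.Norms.L2Operator

variable {n : Type*} [Finite n] {S : Module.End ℂ (Matrix n n ℂ)}

theorem spectralRadius_le_one_of_posSemidef_sub_apply
    (hS : ∀ Q, Q.PosSemidef → (S Q).PosSemidef) {Q : Matrix n n ℂ} (hQ : Q.PosDef)
    (hSQ : (Q - S Q).PosSemidef) : spectralRadius ℂ S ≤ 1 := by
  classical
  have := Fintype.ofFinite n
  rw [← spectralRadius_toContinuousLinearMap]
  exact spectralRadius_le_one_of_apply_le (fun X hX ↦ (hS X hX.posSemidef).nonneg)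
    hQ.isStrictlyPositive (Matrix.le_iff.2 hSQ)

theorem exists_posDef_posSemidef_sub_apply_of_spectralRadius_lt_one
    (hS : ∀ Q, Q.PosSemidef → (S Q).PosSemidef) (hρ : spectralRadius ℂ S < 1) :
    ∃ Q : Matrix n n ℂ, Q.PosDef ∧ (Q - S Q).PosSemidef := by
  classical
  have := Fintype.ofFinite n
  rw [← spectralRadius_toContinuousLinearMap] at hρ
  obtain ⟨Q, hQ, hSQ⟩ :=
    exists_isStrictlyPositive_apply_le_of_spectralRadius_lt_one
      (fun X hX ↦ (hS X hX.posSemidef).nonneg) hρ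
  exact ⟨Q, hQ.posDef, Matrix.le_iff.1 hSQ⟩

end PosSemidef

section Pval

variable {N : ℕ} {L : Mat N} {V : Mat N →ₗ[ℂ] Mat N}

theorem posSemidef_sub_smul_iff {A B : Mat N} (hA : A.IsHermitian) (hB : B.IsHermitian) (t : ℝ) :
    (A - (t : ℂ) • B).PosSemidef ↔ ∀ v, t * qf B v ≤ qf A v := by
  have hAB : (A - (t : ℂ) • B).IsHermitian := hA.sub (hB.smul (Complex.conj_ofReal t))
  have hre (v : Fin N → ℂ) : qf (A - (t : ℂ) • B) v = qf A v - t * qf B v := by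
    simp [qf, Matrix.sub_mulVec, Matrix.smul_mulVec]
  refine ⟨fun h v ↦ ?_, fun h ↦ .of_dotProduct_mulVec_nonneg hAB fun v ↦ ?_⟩
  · rw [← sub_nonneg, ← hre]
    exact h.re_dotProduct_nonneg v
  · refine Complex.nonneg_iff.2 ⟨?_, (hAB.im_star_dotProduct_mulVec_self v).symm⟩
    exact (sub_nonneg.2 (h v)).trans_eq (hre v).symm

theorem le_iInf_ofReal_qf_div_iff {A B : Mat N} (hA : A.PosDef) (hB : B.PosSemidef) (t : ℝ≥0) :
    (t : ℝ≥0∞) ≤ ⨅ v : {v : Fin N → ℂ // v ≠ 0},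
        ENNReal.ofReal (qf A v) / ENNReal.ofReal (qf B v) ↔
      (A - ((t : ℝ) : ℂ) • B).PosSemidef := by
  rw [le_iInf_iff, posSemidef_sub_smul_iff hA.isHermitian hB.isHermitian, Subtype.forall]
  refine forall_congr' fun v ↦ ?_
  rcases eq_or_ne v 0 with rfl | hv
  · simp [qf]
  have hAv : 0 < qf A v := hA.re_dotProduct_pos hv
  rw [forall_prop_of_true hv,
    ENNReal.le_div_iff_mul_le (.inr (ENNReal.ofReal_pos.2 hAv).ne') (.inr ofReal_ne_top),
    ← ENNReal.ofReal_coe_nnreal, ← ENNReal.ofReal_mul t.coe_nonneg,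
    ENNReal.ofReal_le_ofReal_iff hAv.le]

theorem conjBy_conjBy (K L Q : Mat N) : conjBy L (conjBy K Q) = conjBy (K * L) Q := by
  simp only [conjBy, LinearMap.coe_mk, AddHom.coe_mk, Matrix.conjTranspose_mul, Matrix.mul_assoc]

theorem conjBy_one (Q : Mat N) : conjBy 1 Q = Q := by
  simp [conjBy]

theorem conjBy_conjBy_inv (hL : IsUnit L) (Q : Mat N) : conjBy L (conjBy L⁻¹ Q) = Q := by
  rw [conjBy_conjBy, Matrix.nonsing_inv_mul _ ((Matrix.isUnit_iff_isUnit_det L).1 hL), conjBy_one]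

theorem conjBy_inv_conjBy (hL : IsUnit L) (Q : Mat N) : conjBy L⁻¹ (conjBy L Q) = Q := by
  rw [conjBy_conjBy, Matrix.mul_nonsing_inv _ ((Matrix.isUnit_iff_isUnit_det L).1 hL), conjBy_one]

theorem posDef_conjBy (hL : IsUnit L) {Q : Mat N} (hQ : Q.PosDef) : (conjBy L Q).PosDef :=
  hQ.conjTranspose_mul_mul_same (Matrix.mulVec_injective_of_isUnit hL)

theorem posSemidef_Smap (hV : ∀ Q : Mat N, Q.PosSemidef → (V Q).PosSemidef) (Q : Mat N)
    (hQ : Q.PosSemidef) : (Smap L V Q).PosSemidef :=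
  hV _ (hQ.conjTranspose_mul_mul_same _)

theorem Pval_eq_inv_spectralRadius (hL : IsUnit L)
    (hV : ∀ Q : Mat N, Q.PosSemidef → (V Q).PosSemidef) :
    Pval L V = (spectralRadius ℂ (Smap L V))⁻¹ := by
  have hS (t : ℝ≥0) : ∀ Q : Mat N, Q.PosSemidef → ((((t : ℝ) : ℂ) • Smap L V) Q).PosSemidef :=
    fun Q hQ ↦ (posSemidef_Smap hV Q hQ).smul (Complex.zero_le_real.2 t.coe_nonneg)
  have hρ (t : ℝ≥0) : spectralRadius ℂ (((t : ℝ) : ℂ) • Smap L V) =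
      t * spectralRadius ℂ (Smap L V) := by
    rw [spectralRadius_smul]
    simp
  apply le_antisymm
  · refine iSup_le fun ⟨Q, hQ⟩ ↦ ENNReal.le_of_forall_nnreal_lt fun t ht ↦ ?_
    have hsub := (le_iInf_ofReal_qf_div_iff (posDef_conjBy hL hQ) (hV Q hQ.posSemidef) t).1 ht.le
    rw [ENNReal.le_inv_iff_mul_le, ← hρ]
    refine spectralRadius_le_one_of_posSemidef_sub_apply (hS t) (posDef_conjBy hL hQ) ?_
    simpa only [LinearMap.smul_apply, Smap, LinearMap.comp_apply, conjBy_inv_conjBy hL] using hsub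
  · refine ENNReal.le_of_forall_nnreal_lt fun t ht ↦ ?_
    have hlt : spectralRadius ℂ (((t : ℝ) : ℂ) • Smap L V) < 1 := by
      rw [hρ]
      exact ENNReal.mul_lt_of_lt_div (by rwa [one_div])
    obtain ⟨Q, hQ, hsub⟩ :=
      exists_posDef_posSemidef_sub_apply_of_spectralRadius_lt_one (hS t) hlt
    have hQ' : (conjBy L⁻¹ Q).PosDef := posDef_conjBy (Matrix.isUnit_nonsing_inv_iff.2 hL) hQ
    refine le_iSup_of_le ⟨conjBy L⁻¹ Q, hQ'⟩ ?_
    refine (le_iInf_ofReal_qf_div_iff (posDef_conjBy hL hQ') (hV _ hQ'.posSemidef) t).2 ?_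
    rwa [conjBy_conjBy_inv hL]

end Pval

section Convergence

variable {ι : Type*} {l : Filter ι} {N : ℕ}

theorem tendsto_linearMap_apply {𝕜 E F : Type*} [NontriviallyNormedField 𝕜]
    [CompleteSpace 𝕜] [AddCommGroup E] [Module 𝕜 E] [TopologicalSpace E]
    [IsTopologicalAddGroup E] [ContinuousSMul 𝕜 E] [T2Space E] [FiniteDimensional 𝕜 E]
    [AddCommGroup F] [Module 𝕜 F] [TopologicalSpace F] [ContinuousAdd F] [ContinuousSMul 𝕜 F]
    {f : ι → E →ₗ[𝕜] F} {g : E →ₗ[𝕜] F} (hf : ∀ x, Tendsto (fun i ↦ f i x) l (𝓝 (g x)))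
    {u : ι → E} {x : E} (hu : Tendsto u l (𝓝 x)) :
    Tendsto (fun i ↦ f i (u i)) l (𝓝 (g x)) := by
  let b := Module.finBasis 𝕜 E
  have hcoord (j) : Tendsto (fun i ↦ b.repr (u i) j) l (𝓝 (b.repr x j)) :=
    ((LinearMap.continuous_of_finiteDimensional (b.coord j)).tendsto x).comp hu
  have hexpand (h : E →ₗ[𝕜] F) (y : E) : h y = ∑ j, b.repr y j • h (b j) := by
    conv_lhs => rw [← b.sum_repr y, map_sum]
    simp only [map_smul]
  simp only [hexpand _ (u _), hexpand g x]
  exact tendsto_finsetSum _ fun j _ ↦ (hcoord j).smul (hf (b j))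

theorem tendsto_matrix_inv {n 𝕜 : Type*} [Fintype n] [DecidableEq n] [NormedField 𝕜]
    {A : Matrix n n 𝕜} (hA : IsUnit A) : Tendsto (·⁻¹) (𝓝 A) (𝓝 A⁻¹) := by
  have hdet := (Matrix.isUnit_iff_isUnit_det A).1 hA
  refine continuousAt_matrix_inv A ?_
  rw [Ring.inverse_eq_inv']
  exact continuousAt_inv₀ hdet.ne_zero

theorem eventually_isUnit_matrix {n 𝕜 : Type*} [Fintype n] [DecidableEq n] [NormedField 𝕜]
    {A : Matrix n n 𝕜} (hA : IsUnit A) : ∀ᶠ B in 𝓝 A, IsUnit B := by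
  have hdet : Continuous fun B : Matrix n n 𝕜 ↦ B.det := by fun_prop
  simp only [Matrix.isUnit_iff_isUnit_det, isUnit_iff_ne_zero] at hA ⊢
  exact hdet.continuousAt.eventually_ne hA

theorem tendsto_Smap {C : Mat N} (hC : IsUnit C) {V : Mat N →ₗ[ℂ] Mat N} {CM : ι → Mat N}
    {VM : ι → Mat N →ₗ[ℂ] Mat N} (hCM : Tendsto CM l (𝓝 C))
    (hVM : ∀ Q, Tendsto (fun i ↦ VM i Q) l (𝓝 (V Q))) (Q : Mat N) :
    Tendsto (fun i ↦ Smap (CM i) (VM i) Q) l (𝓝 (Smap C V Q)) := by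
  have hinv : Tendsto (fun i ↦ (CM i)⁻¹) l (𝓝 C⁻¹) := (tendsto_matrix_inv hC).comp hCM
  have hconj : Continuous fun X : Mat N ↦ conjBy X Q := by
    simp only [conjBy, LinearMap.coe_mk, AddHom.coe_mk]
    fun_prop
  exact tendsto_linearMap_apply hVM ((hconj.tendsto _).comp hinv)

end Convergence

theorem stmt10_general {ι : Type*} {l : Filter ι} {N : ℕ} (C : Mat N) (hC : IsUnit C)
    (V : Mat N →ₗ[ℂ] Mat N)
    (hVpsd : ∀ Q : Mat N, Q.PosSemidef → (V Q).PosSemidef)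
    (CM : ι → Mat N) (VM : ι → (Mat N →ₗ[ℂ] Mat N))
    (hVMpsd : ∀ᶠ M in l, ∀ Q : Mat N, Q.PosSemidef → (VM M Q).PosSemidef)
    (hCconv : Tendsto CM l (𝓝 C))
    (hVconv : ∀ Q : Mat N, Tendsto (fun M => VM M Q) l (𝓝 (V Q))) :
    Tendsto (fun M => Pval (CM M) (VM M)) l (𝓝 (Pval C V)) := by
  have hρ := tendsto_spectralRadius_of_tendsto_apply (tendsto_Smap hC hCconv hVconv)
  rw [Pval_eq_inv_spectralRadius hC hVpsd]
  refine (tendsto_inv_iff.2 hρ).congr' ?_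
  filter_upwards [hCconv.eventually (eventually_isUnit_matrix hC), hVMpsd] with M hM hpsd
  exact (Pval_eq_inv_spectralRadius hM hpsd).symm

open Filter Topology in
/-- consistency.  If `Ĉ_M → C` (with `C` invertible) and `𝒱̂_M[Q] → 𝒱[Q]`
for all `Q`, with all maps Hermitian- and PSD-preserving, then `P̂_M → P` in `[0,∞]`. -/
theorem stmt10 {N : ℕ} (hN : 0 < N) (C : Mat N) (hC : IsUnit C)
    (V : Mat N →ₗ[ℂ] Mat N)
    (hVherm : ∀ Q : Mat N, Q.IsHermitian → (V Q).IsHermitian)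
    (hVpsd : ∀ Q : Mat N, Q.PosSemidef → (V Q).PosSemidef)
    (CM : ℕ → Mat N) (VM : ℕ → (Mat N →ₗ[ℂ] Mat N))
    (hVMherm : ∀ (M : ℕ) (Q : Mat N), Q.IsHermitian → (VM M Q).IsHermitian)
    (hVMpsd : ∀ (M : ℕ) (Q : Mat N), Q.PosSemidef → (VM M Q).PosSemidef)
    (hCconv : Tendsto CM atTop (𝓝 C))
    (hVconv : ∀ Q : Mat N, Tendsto (fun M => VM M Q) atTop (𝓝 (V Q))) :
    Tendsto (fun M => Pval (CM M) (VM M)) atTop (𝓝 (Pval C V)) :=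
  stmt10_general C hC V hVpsd CM VM (.of_forall hVMpsd) hCconv hVconv

end
end
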